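/- Every fair division instance with three agents having separable single-peaked valuations admits an EF1 allocation. -/

import Mathlib

open Finset

/-- Decrement coordinate `j` of a count-vector bundle by one. -/
def decAt {t : ℕ} (B : Fin t → ℕ) (j : Fin t) : Fin t → ℕ :=
  Function.update B j (B j - 1)

/-- EF1 for count-based bundles: any envy can be eliminated by removing a
single item (decrementing one type-count) from one of the two bundles. -/
def EF1c {n t : ℕ} (v : Fin n → (Fin t → ℕ) → ℤ)
    (A : Fin n → Fin t → ℕ) : Prop :=
  ∀ i k, v i (A i) < v i (A k) →
    ∃ j : Fin t, (0 < A i j ∧ v i (decAt (A i) j) ≥ v i (A k)) ∨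
                 (0 < A k j ∧ v i (A i) ≥ v i (decAt (A k) j))

/-- Value in the eyes of `i` of the items of `S` assigned to `k`. -/
def WW {ι : Type} (w : Fin 3 → ι → ℤ) (g : ι → Fin 3) (S : Finset ι) (i k : Fin 3) : ℤ :=
  ∑ x ∈ S, if g x = k then w i x else 0

/-- No envy up to one good. -/
def UU {ι : Type} (w : Fin 3 → ι → ℤ) (g : ι → Fin 3) (S : Finset ι) (i k : Fin 3) : Prop :=
  WW w g S i k ≤ WW w g S i i ∨ ∃ y ∈ S, g y = k ∧ WW w g S i k - w i y ≤ WW w g S i i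

/-- One item from both sides can be dropped. -/
def DD {ι : Type} (w : Fin 3 → ι → ℤ) (g : ι → Fin 3) (S : Finset ι) (i k : Fin 3) : Prop :=
  S = ∅ ∨ ∃ u ∈ S, ∃ y ∈ S, g u = i ∧ g y = k ∧
    WW w g S i k - w i y ≤ WW w g S i i - w i u

/-- Invariant for goods. -/
def PP {ι : Type} (w : Fin 3 → ι → ℤ) (g : ι → Fin 3) (S : Finset ι) (a b c : Fin 3) : Prop :=
  WW w g S a b ≤ WW w g S a a ∧ WW w g S a c ≤ WW w g S a a ∧ WW w g S b c ≤ WW w g S b b ∧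
  UU w g S b a ∧ UU w g S c a ∧ UU w g S c b ∧ ∀ x ∈ S, 0 ≤ w (g x) x

lemma WW_update {ι : Type} [DecidableEq ι] (w : Fin 3 → ι → ℤ) (g : ι → Fin 3) (S : Finset ι)
    (x : ι) (hx : x ∈ S) (a i k : Fin 3) :
    WW w (Function.update g x a) S i k
      = WW w g (S.erase x) i k + if a = k then w i x else 0 := by
  unfold WW
  rw [← Finset.sum_erase_add _ _ hx]
  congr 1
  · apply Finset.sum_congr rfl
    intro y hy
    rw [Function.update_of_ne (Finset.ne_of_mem_erase hy)]
  · simp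

lemma PP_rot {ι : Type} (w : Fin 3 → ι → ℤ) (g : ι → Fin 3) (S : Finset ι) (a b c : Fin 3)
    (hneg : ∀ x ∈ S, w a x < 0) (h : PP w g S b c a) : PP w g S a b c := by
  obtain ⟨h1, h2, h3, h4, h5, h6, h7⟩ := h
  have h0 : WW w g S a a = 0 := by
    apply Finset.sum_eq_zero
    intro x hx
    split_ifs with hg
    · have := h7 x hx
      have := hneg x hx
      rw [hg] at *
      omega
    · rfl
  have hle : ∀ k, WW w g S a k ≤ 0 := by
    intro k
    apply Finset.sum_nonpos
    intro x hx
    have := hneg x hx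
    split_ifs <;> omega
  refine ⟨?_, ?_, h1, Or.inl h2, Or.inl h3, h4, h7⟩
  · rw [h0]; exact hle b
  · rw [h0]; exact hle c

lemma UU_pick {ι : Type} [DecidableEq ι] (w : Fin 3 → ι → ℤ) (g : ι → Fin 3) (S : Finset ι)
    (x : ι) (hx : x ∈ S) (a b : Fin 3) (hab : a ≠ b) (h0 : 0 ≤ w a x)
    (hmax : ∀ y ∈ S, w a y ≤ w a x) (h : UU w g (S.erase x) a b) :
    WW w (Function.update g x a) S a b ≤ WW w (Function.update g x a) S a a := by
  rw [WW_update w g S x hx, WW_update w g S x hx, if_neg hab, if_pos rfl]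
  rcases h with h | ⟨y, hy, _, h⟩
  · omega
  · have := hmax y (Finset.mem_of_mem_erase hy)
    omega

lemma PP_pick {ι : Type} [DecidableEq ι] (w : Fin 3 → ι → ℤ) (S : Finset ι)
    (a b c : Fin 3) (hab : a ≠ b) (hac : a ≠ c)
    (hpos : ∃ x ∈ S, 0 ≤ w a x) (ih : ∀ x ∈ S, ∃ g, PP w g (S.erase x) b c a) :
    ∃ g, PP w g S a b c := by
  obtain ⟨z, hz, hz0⟩ := hpos
  obtain ⟨x, hx, hmax⟩ := Finset.exists_max_image S (w a) ⟨z, hz⟩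
  have h0 : 0 ≤ w a x := hz0.trans (hmax z hz)
  obtain ⟨g, h1, h2, h3, h4, h5, h6, h7⟩ := ih x hx
  have hW := fun i k => WW_update w g S x hx a i k
  refine ⟨Function.update g x a, UU_pick w g S x hx a b hab h0 hmax h5,
    UU_pick w g S x hx a c hac h0 hmax h6, ?_, ?_, ?_, ?_, ?_⟩
  · rw [hW, hW, if_neg hac, if_neg hab]; omega
  · right
    refine ⟨x, hx, by simp, ?_⟩
    rw [hW, hW, if_pos rfl, if_neg hab]; omega
  · right
    refine ⟨x, hx, by simp, ?_⟩
    rw [hW, hW, if_pos rfl, if_neg hac]; omega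
  · rcases h4 with h4 | ⟨y, hy, hgy, h4⟩
    · left
      rw [hW, hW, if_neg hac, if_neg hab]; omega
    · right
      refine ⟨y, Finset.mem_of_mem_erase hy, ?_, ?_⟩
      · rw [Function.update_of_ne (Finset.ne_of_mem_erase hy)]; exact hgy
      · rw [hW, hW, if_neg hac, if_neg hab]; omega
  · intro y hy
    by_cases hyx : y = x
    · subst hyx; simpa using h0
    · rw [Function.update_of_ne hyx]
      exact h7 y (Finset.mem_erase.2 ⟨hyx, hy⟩)

lemma PP_exists {ι : Type} [DecidableEq ι] (w : Fin 3 → ι → ℤ) (n : ℕ) :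
    ∀ (S : Finset ι), S.card = n → (∀ x ∈ S, ∃ i, 0 ≤ w i x) →
    ∀ (a b c : Fin 3), a ≠ b → a ≠ c → b ≠ c → ∃ g, PP w g S a b c := by
  induction n with
  | zero =>
    intro S hS _ a b c _ _ _
    rw [Finset.card_eq_zero] at hS
    subst hS
    exact ⟨fun _ => 0, by simp [PP, UU, WW]⟩
  | succ n ih =>
    intro S hS hpos a b c hab hac hbc
    have ih' : ∀ a b c : Fin 3, a ≠ b → a ≠ c → b ≠ c → ∀ x ∈ S,
        ∃ g, PP w g (S.erase x) a b c := by
      intro a b c hab hac hbc x hx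
      refine ih _ (by rw [Finset.card_erase_of_mem hx, hS]; rfl) ?_ a b c hab hac hbc
      intro y hy
      exact hpos y (Finset.mem_of_mem_erase hy)
    by_cases ha : ∃ x ∈ S, 0 ≤ w a x
    · exact PP_pick w S a b c hab hac ha (ih' b c a hbc hab.symm hac.symm)
    suffices h : ∃ g, PP w g S b c a by
      obtain ⟨g, h⟩ := h
      push Not at ha
      exact ⟨g, PP_rot w g S a b c ha h⟩
    by_cases hb : ∃ x ∈ S, 0 ≤ w b x
    · exact PP_pick w S b c a hbc hab.symm hb (ih' c a b hac.symm hbc.symm hab)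
    suffices h : ∃ g, PP w g S c a b by
      obtain ⟨g, h⟩ := h
      push Not at hb
      exact ⟨g, PP_rot w g S b c a hb h⟩
    apply PP_pick w S c a b hac.symm hbc.symm _ (ih' a b c hab hac hbc)
    have hne : S.Nonempty := by rw [← Finset.card_pos]; omega
    obtain ⟨x, hx⟩ := hne
    obtain ⟨i, hi⟩ := hpos x hx
    refine ⟨x, hx, ?_⟩
    have hi3 : i = a ∨ i = b ∨ i = c := by omega
    rcases hi3 with rfl | rfl | rfl
    · exact absurd ⟨x, hx, hi⟩ ha
    · exact absurd ⟨x, hx, hi⟩ hb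
    · exact hi

/-- Invariant for chores (in full rounds). -/
def QQ {ι : Type} (w : Fin 3 → ι → ℤ) (g : ι → Fin 3) (S : Finset ι) : Prop :=
  (∀ i k : Fin 3, i < k → WW w g S i k ≤ WW w g S i i) ∧
  (∀ i k : Fin 3, k < i → DD w g S i k)

lemma QQ_exists {ι : Type} [DecidableEq ι] (w : Fin 3 → ι → ℤ) (n : ℕ) :
    ∀ (S : Finset ι), S.card = 3 * n → ∃ g, QQ w g S := by
  induction n with
  | zero =>
    intro S hS
    have hS : S = ∅ := by simpa using hS
    subst hS
    exact ⟨fun _ => 0, by simp [QQ, DD, WW]⟩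
  | succ n ih =>
    intro S hS
    obtain ⟨x, hx, hxm⟩ := Finset.exists_max_image S (w 0) (by rw [← Finset.card_pos]; omega)
    have c1 : (S.erase x).card = 3 * n + 2 := by rw [Finset.card_erase_of_mem hx]; omega
    obtain ⟨y, hy, hym⟩ := Finset.exists_max_image (S.erase x) (w 1)
      (by rw [← Finset.card_pos]; omega)
    have c2 : ((S.erase x).erase y).card = 3 * n + 1 := by
      rw [Finset.card_erase_of_mem hy]; omega
    obtain ⟨z, hz, hzm⟩ := Finset.exists_max_image ((S.erase x).erase y) (w 2)
      (by rw [← Finset.card_pos]; omega)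
    have c3 : (((S.erase x).erase y).erase z).card = 3 * n := by
      rw [Finset.card_erase_of_mem hz]; omega
    obtain ⟨g, hE, hD⟩ := ih _ c3
    set T := ((S.erase x).erase y).erase z with hT
    have hyx : y ≠ x := Finset.ne_of_mem_erase hy
    have hzy : z ≠ y := Finset.ne_of_mem_erase hz
    have hz' := Finset.mem_of_mem_erase hz
    have hzx : z ≠ x := Finset.ne_of_mem_erase hz'
    have hyS := Finset.mem_of_mem_erase hy
    have hzS := Finset.mem_of_mem_erase hz'
    have hTm : ∀ u ∈ T, u ∈ S ∧ u ≠ x ∧ u ≠ y ∧ u ≠ z := by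
      intro u hu
      simp only [hT, Finset.mem_erase] at hu
      tauto
    set G := Function.update (Function.update (Function.update g z 2) y 1) x 0 with hG
    have hW : ∀ i k, WW w G S i k = WW w g T i k + (if (2 : Fin 3) = k then w i z else 0)
        + (if (1 : Fin 3) = k then w i y else 0) + (if (0 : Fin 3) = k then w i x else 0) := by
      intro i k
      rw [hG, WW_update w _ S x hx, WW_update w _ _ y hy, WW_update w _ _ z hz]
    have Gx : G x = 0 := by simp [hG]
    have Gy : G y = 1 := by simp [hG, hyx]
    have Gz : G z = 2 := by simp [hG, hzx, hzy]
    have Gu : ∀ u ∈ T, G u = g u := by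
      intro u hu
      obtain ⟨_, h1, h2, h3⟩ := hTm u hu
      simp [hG, h1, h2, h3]
    have key : ∀ (i k : Fin 3) (p r : ι), p ∈ S → r ∈ S → G p = i → G r = k →
        WW w G S i i = WW w g T i i + w i p → WW w G S i k = WW w g T i k + w i r →
        (∀ u ∈ T, w i u ≤ w i p) → DD w g T i k → DD w G S i k := by
      intro i k p r hp hr hGp hGr h1 h2 hm hd
      right
      rcases hd with hd | ⟨u, hu, s, hs, hgu, hgs, hd⟩
      · refine ⟨p, hp, r, hr, hGp, hGr, ?_⟩
        rw [h1, h2, hd]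
        simp [WW]
      · refine ⟨u, (hTm u hu).1, r, hr, (Gu u hu).trans hgu, hGr, ?_⟩
        have := hm s hs
        rw [h1, h2]
        omega
    have m1 : ∀ u ∈ T, w 1 u ≤ w 1 y := fun u hu =>
      hym u (Finset.mem_erase.2 ⟨(hTm u hu).2.1, (hTm u hu).1⟩)
    have m2 : ∀ u ∈ T, w 2 u ≤ w 2 z := fun u hu => hzm u (Finset.mem_of_mem_erase hu)
    refine ⟨G, ?_, ?_⟩
    · intro i k hik
      have h := hE i k hik
      have a1 := hxm y hyS
      have a2 := hxm z hzS
      have a3 := hym z hz'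
      rw [hW, hW]
      fin_cases i <;> fin_cases k <;> simp at hik h ⊢ <;> omega
    · intro i k hik
      have h := hD i k hik
      have hcase : (i = 1 ∧ k = 0) ∨ (i = 2 ∧ k = 0) ∨ (i = 2 ∧ k = 1) := by omega
      rcases hcase with ⟨rfl, rfl⟩ | ⟨rfl, rfl⟩ | ⟨rfl, rfl⟩
      · exact key 1 0 y x hyS hx Gy Gx (by rw [hW]; simp) (by rw [hW]; simp) m1 h
      · exact key 2 0 z x hzS hx Gz Gx (by rw [hW]; simp) (by rw [hW]; simp) m2 h
      · exact key 2 1 z y hzS hyS Gz Gy (by rw [hW]; simp) (by rw [hW]; simp) m2 h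

lemma chores_exists {ι : Type} [DecidableEq ι] (w : Fin 3 → ι → ℤ) (S : Finset ι)
    (hneg : ∀ x ∈ S, ∀ i, w i x ≤ 0) :
    ∃ g : ι → Fin 3, (∀ i k : Fin 3, i < k → WW w g S i k ≤ WW w g S i i) ∧
      (∀ i k : Fin 3, k < i → WW w g S i k ≤ WW w g S i i ∨
        ∃ u ∈ S, g u = i ∧ WW w g S i k ≤ WW w g S i i - w i u) := by
  let w' : Fin 3 → (ι ⊕ Fin (2 * S.card)) → ℤ := fun i => Sum.elim (w i) (fun _ => 0)
  let S' : Finset (ι ⊕ Fin (2 * S.card)) := S.disjSum Finset.univ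
  obtain ⟨g, hE, hD⟩ := QQ_exists w' S.card S' (by simp [S', Finset.card_disjSum]; ring)
  have hW : ∀ i k, WW w' g S' i k = WW w (fun x => g (Sum.inl x)) S i k := by
    intro i k
    simp [WW, S', w', Finset.sum_disjSum]
  have hneg' : ∀ y ∈ S', ∀ i, w' i y ≤ 0 := by
    intro y hy i
    rcases y with y | y
    · exact hneg y (by simpa [S'] using hy) i
    · simp [w']
  refine ⟨fun x => g (Sum.inl x), ?_, ?_⟩
  · intro i k hik
    rw [← hW, ← hW]
    exact hE i k hik
  · intro i k hik
    rw [← hW, ← hW]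
    rcases hD i k hik with h | ⟨u, hu, y, hy, hgu, hgy, h⟩
    · left
      rw [h]; simp [WW]
    · have hy0 := hneg' y hy i
      rcases u with u | u
      · right
        refine ⟨u, by simpa [S'] using hu, hgu, ?_⟩
        have : w' i (Sum.inl u) = w i u := rfl
        omega
      · left
        have : w' i (Sum.inr u) = 0 := rfl
        omega

lemma mixed_exists {ι : Type} [DecidableEq ι] (w : Fin 3 → ι → ℤ) (S : Finset ι) :
    ∃ g : ι → Fin 3, ∀ i k : Fin 3, i ≠ k → WW w g S i k ≤ WW w g S i i ∨
      (∃ u ∈ S, g u = i ∧ WW w g S i k ≤ WW w g S i i - w i u) ∨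
      (∃ u ∈ S, g u = k ∧ WW w g S i k - w i u ≤ WW w g S i i) := by
  classical
  let p : ι → Prop := fun x => ∃ i, 0 ≤ w i x
  obtain ⟨g1, h1, h2, h3, h4, h5, h6, -⟩ := PP_exists w _ (S.filter p) rfl
    (fun x hx => (Finset.mem_filter.1 hx).2) 2 1 0 (by decide) (by decide) (by decide)
  obtain ⟨g2, hE, hD⟩ := chores_exists w (S.filter (fun x => ¬ p x)) (by
    intro x hx i
    by_contra hc
    exact (Finset.mem_filter.1 hx).2 ⟨i, by omega⟩)
  let g : ι → Fin 3 := fun x => if p x then g1 x else g2 x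
  have hW : ∀ i k, WW w g S i k
      = WW w g1 (S.filter p) i k + WW w g2 (S.filter (fun x => ¬ p x)) i k := by
    intro i k
    unfold WW
    rw [← Finset.sum_filter_add_sum_filter_not S p]
    congr 1
    · apply Finset.sum_congr rfl
      intro x hx
      simp only [g, if_pos (Finset.mem_filter.1 hx).2]
    · apply Finset.sum_congr rfl
      intro x hx
      simp only [g, if_neg (Finset.mem_filter.1 hx).2]
  have hU : ∀ i k : Fin 3, i < k → UU w g1 (S.filter p) i k := by
    intro i k hik
    have hcase : (i = 0 ∧ k = 1) ∨ (i = 0 ∧ k = 2) ∨ (i = 1 ∧ k = 2) := by omega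
    rcases hcase with ⟨rfl, rfl⟩ | ⟨rfl, rfl⟩ | ⟨rfl, rfl⟩ <;> assumption
  have hE1 : ∀ i k : Fin 3, k < i → WW w g1 (S.filter p) i k ≤ WW w g1 (S.filter p) i i := by
    intro i k hik
    have hcase : (i = 1 ∧ k = 0) ∨ (i = 2 ∧ k = 0) ∨ (i = 2 ∧ k = 1) := by omega
    rcases hcase with ⟨rfl, rfl⟩ | ⟨rfl, rfl⟩ | ⟨rfl, rfl⟩ <;> assumption
  refine ⟨g, ?_⟩
  intro i k hik
  simp only [hW]
  rcases lt_or_gt_of_ne hik with h | h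
  · have e := hE i k h
    rcases hU i k h with u | ⟨y, hy, hgy, u⟩
    · left; omega
    · right; right
      refine ⟨y, (Finset.mem_filter.1 hy).1, ?_, by omega⟩
      simp only [g, if_pos (Finset.mem_filter.1 hy).2, hgy]
  · have e := hE1 i k h
    rcases hD i k h with u | ⟨y, hy, hgy, u⟩
    · left; omega
    · right; left
      refine ⟨y, (Finset.mem_filter.1 hy).1, ?_, by omega⟩
      simp only [g, if_neg (Finset.mem_filter.1 hy).2, hgy]

lemma sum_decAt {t : ℕ} (F : Fin t → ℕ → ℤ) (B : Fin t → ℕ) (j : Fin t) :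
    ∑ l, F l (decAt B j l) = ∑ l, F l (B l) - F j (B j) + F j (B j - 1) := by
  rw [← Finset.sum_erase_add _ _ (Finset.mem_univ j),
    ← Finset.sum_erase_add _ (fun l => F l (B l)) (Finset.mem_univ j)]
  have : ∑ l ∈ Finset.univ.erase j, F l (decAt B j l) = ∑ l ∈ Finset.univ.erase j, F l (B l) := by
    apply Finset.sum_congr rfl
    intro l hl
    rw [decAt, Function.update_of_ne (Finset.ne_of_mem_erase hl)]
  rw [this]
  simp [decAt]

theorem stmt18 {t : ℕ} (m : Fin t → ℕ)
    (f : Fin 3 → Fin t → ℕ → ℤ) (θ : Fin 3 → Fin t → ℕ)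
    -- each f i j is single-peaked with peak θ i j
    (hup : ∀ i j, ∀ x y : ℕ, x ≤ y → y ≤ θ i j → f i j x ≤ f i j y)
    (hdown : ∀ i j, ∀ x y : ℕ, θ i j ≤ x → x ≤ y → f i j x ≥ f i j y)
    (v : Fin 3 → (Fin t → ℕ) → ℤ)
    (hv : ∀ i B, v i B = ∑ j, f i j (B j)) :
    ∃ A : Fin 3 → Fin t → ℕ, (∀ j, ∑ i, A i j = m j) ∧ EF1c v A := by
  let d : Fin 3 → Fin t → ℤ := fun i j => f i j (m j / 3 + 1) - f i j (m j / 3)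
  let w : Fin 3 → Fin t → ℤ := fun i j => if m j % 3 = 1 then d i j else - d i j
  let S : Finset (Fin t) := Finset.univ.filter (fun j => m j % 3 ≠ 0)
  obtain ⟨g, hg⟩ := mixed_exists w S
  let A : Fin 3 → Fin t → ℕ := fun i j =>
    if m j % 3 = 0 then m j / 3
    else if m j % 3 = 1 then (if g j = i then m j / 3 + 1 else m j / 3)
    else (if g j = i then m j / 3 else m j / 3 + 1)
  let base : Fin 3 → Fin t → ℤ := fun i j =>
    if m j % 3 = 2 then f i j (m j / 3 + 1) else f i j (m j / 3)
  have hA : ∀ i k, v i (A k) = ∑ j, base i j + WW w g S i k := by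
    intro i k
    rw [hv, WW, Finset.sum_filter, ← Finset.sum_add_distrib]
    apply Finset.sum_congr rfl
    intro j _
    have h3 : m j % 3 = 0 ∨ m j % 3 = 1 ∨ m j % 3 = 2 := by omega
    rcases h3 with h | h | h <;> by_cases hk : g j = k <;> simp [A, base, w, d, h, hk]
  refine ⟨A, ?_, ?_⟩
  · intro j
    rw [Fin.sum_univ_three]
    have h3 : m j % 3 = 0 ∨ m j % 3 = 1 ∨ m j % 3 = 2 := by omega
    have hgj : g j = 0 ∨ g j = 1 ∨ g j = 2 := by omega
    rcases h3 with h | h | h <;> rcases hgj with hk | hk | hk <;> simp [A, h, hk] <;> omega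
  · intro i k hlt
    have hik : i ≠ k := by
      rintro rfl
      exact lt_irrefl _ hlt
    have hdec : ∀ (l : Fin 3) (j : Fin t), v i (decAt (A l) j)
        = v i (A l) - f i j (A l j) + f i j (A l j - 1) := by
      intro l j
      rw [hv, hv]
      exact sum_decAt (f i) (A l) j
    have hi := hA i i
    have hk := hA i k
    rcases hg i k hik with h | ⟨u, hu, hgu, h⟩ | ⟨u, hu, hgu, h⟩
    · omega
    · refine ⟨u, ?_⟩
      have hu0 : m u % 3 ≠ 0 := (Finset.mem_filter.1 hu).2
      rw [hdec, hdec]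
      have h3 : m u % 3 = 1 ∨ m u % 3 = 2 := by omega
      rcases h3 with h3 | h3
      · left
        have e : A i u = m u / 3 + 1 := by simp [A, h3, hgu]
        have ew : w i u = f i u (m u / 3 + 1) - f i u (m u / 3) := by simp [w, d, h3]
        rw [e, Nat.add_sub_cancel]
        exact ⟨by omega, by omega⟩
      · right
        have e : A k u = m u / 3 + 1 := by simp [A, h3, hgu, hik]
        have ew : w i u = -(f i u (m u / 3 + 1) - f i u (m u / 3)) := by simp [w, d, h3]
        rw [e, Nat.add_sub_cancel]
        exact ⟨by omega, by omega⟩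
    · refine ⟨u, ?_⟩
      have hu0 : m u % 3 ≠ 0 := (Finset.mem_filter.1 hu).2
      rw [hdec, hdec]
      have h3 : m u % 3 = 1 ∨ m u % 3 = 2 := by omega
      rcases h3 with h3 | h3
      · right
        have e : A k u = m u / 3 + 1 := by simp [A, h3, hgu]
        have ew : w i u = f i u (m u / 3 + 1) - f i u (m u / 3) := by simp [w, d, h3]
        rw [e, Nat.add_sub_cancel]
        exact ⟨by omega, by omega⟩
      · left
        have e : A i u = m u / 3 + 1 := by simp [A, h3, hgu, hik.symm]
        have ew : w i u = -(f i u (m u / 3 + 1) - f i u (m u / 3)) := by simp [w, d, h3]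
        rw [e, Nat.add_sub_cancel]
        exact ⟨by omega, by omega⟩
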